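/- arXiv:1903.08742 — 5 statements merged into one kernel-verified Lean document; each statement's English description precedes it below -/
import Mathlib

section
/- For any positive integers s and d, there exists a real polynomial p of degree at most d such that sup_{x ∈ [−1,1]} |p(x) − x^s| ≤ 2·exp(−d²/(2s)). -/
open Polynomial in
lemma aux_cos_pow (s : ℕ) (θ : ℝ) :
    (Real.cos θ) ^ s = ∑ k ∈ Finset.range (s + 1),
      ((s.choose k : ℝ) / 2 ^ s) * Real.cos (((2 * k - s : ℤ) : ℝ) * θ) := by
  have h1 : ((2 * Real.cos θ : ℝ) : ℂ) ^ s = ∑ k ∈ Finset.range (s + 1),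
      (s.choose k : ℂ) * Complex.exp ((((2 * k - s : ℤ) : ℝ) * θ : ℝ) * Complex.I) := by
    have : ((2 * Real.cos θ : ℝ) : ℂ)
        = Complex.exp (θ * Complex.I) + Complex.exp (-θ * Complex.I) := by
      push_cast
      rw [Complex.two_cos]
    rw [this, add_pow]
    refine Finset.sum_congr rfl fun k hk => ?_
    have hk' : k ≤ s := by simpa [Nat.lt_succ_iff] using hk
    rw [← Complex.exp_nat_mul, ← Complex.exp_nat_mul, ← Complex.exp_add, mul_comm]
    congr 2
    push_cast [Nat.cast_sub hk']
    ring
  have h2 := congrArg Complex.re h1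
  rw [← Complex.ofReal_pow, Complex.ofReal_re, Complex.re_sum] at h2
  have h3 : (2 * Real.cos θ) ^ s = ∑ k ∈ Finset.range (s + 1),
      (s.choose k : ℝ) * Real.cos (((2 * k - s : ℤ) : ℝ) * θ) := by
    rw [h2]
    refine Finset.sum_congr rfl fun k _ => ?_
    rw [← Complex.ofReal_natCast, Complex.re_ofReal_mul, Complex.exp_ofReal_mul_I_re]
  have h4 : Real.cos θ ^ s = (2 * Real.cos θ) ^ s / 2 ^ s := by
    rw [mul_pow]; field_simp
  rw [h4, h3, Finset.sum_div]
  exact Finset.sum_congr rfl fun k _ => by ring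

lemma aux_exp (s : ℕ) (l : ℝ) :
    ∑ k ∈ Finset.range (s + 1), ((s.choose k : ℝ) / 2 ^ s) * Real.exp (l * ((2 * k - s : ℤ) : ℝ))
      = Real.cosh l ^ s := by
  rw [Real.cosh_eq, div_pow, add_pow, Finset.sum_div]
  refine Finset.sum_congr rfl fun k hk => ?_
  have hk' : k ≤ s := by simpa [Nat.lt_succ_iff] using hk
  rw [← Real.exp_nat_mul, ← Real.exp_nat_mul, ← Real.exp_add]
  have : (k : ℝ) * l + ((s - k : ℕ) : ℝ) * -l = l * ((2 * k - s : ℤ) : ℝ) := by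
    push_cast [Nat.cast_sub hk']
    ring
  rw [this]; ring

/-- **Proposition 2 (polynomial approximation of the monomial).**
For any positive integers `s` and `d`, there exists a real polynomial `p` of degree at
most `d` such that `sup_{x ∈ [−1,1]} |p(x) − x^s| ≤ 2 · exp(−d²/(2s))`. -/
theorem monomial_approx_by_low_degree_polynomial (s d : ℕ) (hs : 0 < s) (hd : 0 < d) :
    ∃ p : Polynomial ℝ, p.natDegree ≤ d ∧
      ∀ x ∈ Set.Icc (-1 : ℝ) 1,
        |p.eval x - x ^ s| ≤ 2 * Real.exp (-(d : ℝ) ^ 2 / (2 * s)) := by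
  refine ⟨∑ k ∈ Finset.range (s + 1), if (2 * k - s : ℤ).natAbs ≤ d then
    Polynomial.C ((s.choose k : ℝ) / 2 ^ s) * Polynomial.Chebyshev.T ℝ (2 * k - s : ℤ) else 0,
    ?_, ?_⟩
  · refine Polynomial.natDegree_sum_le_of_forall_le _ _ fun k _ => ?_
    split_ifs with h
    · refine (Polynomial.natDegree_C_mul_le _ _).trans ?_
      rwa [Polynomial.Chebyshev.natDegree_T]
    · simp
  · intro x hx
    obtain ⟨θ, rfl⟩ : ∃ θ, Real.cos θ = x := ⟨_, Real.cos_arccos hx.1 hx.2⟩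
    rw [aux_cos_pow, Polynomial.eval_finset_sum, ← Finset.sum_sub_distrib]
    have hs' : (0 : ℝ) < s := by exact_mod_cast hs
    set l : ℝ := d / s with hl
    have hl0 : 0 < l := by positivity
    calc _ ≤ ∑ k ∈ Finset.range (s + 1), Real.exp (-(l * d)) *
          (((s.choose k : ℝ) / 2 ^ s) * Real.exp (l * ((2 * k - s : ℤ) : ℝ))
          + ((s.choose k : ℝ) / 2 ^ s) * Real.exp (-l * ((2 * k - s : ℤ) : ℝ))) := by
          refine (Finset.abs_sum_le_sum_abs _ _).trans (Finset.sum_le_sum fun k _ => ?_)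
          generalize (2 * k - s : ℤ) = n
          have hc : (0 : ℝ) ≤ (s.choose k : ℝ) / 2 ^ s := by positivity
          split_ifs with h
          · rw [Polynomial.eval_mul, Polynomial.eval_C, Polynomial.Chebyshev.T_real_cos, sub_self,
              abs_zero]
            positivity
          · rw [Polynomial.eval_zero, zero_sub, abs_neg, abs_mul, abs_of_nonneg hc]
            have h1 : 1 ≤ Real.exp (-(l * d)) *
                (Real.exp (l * (n : ℝ)) + Real.exp (-l * (n : ℝ))) := by
              rw [mul_add, ← Real.exp_add, ← Real.exp_add]
              have hn : (d : ℤ) ≤ n ∨ (d : ℤ) ≤ -n := by omega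
              rcases hn with hn | hn
              · have hn' : (d : ℝ) ≤ n := by exact_mod_cast hn
                have := Real.one_le_exp (x := -(l * d) + l * n) (by nlinarith)
                have := Real.exp_pos (-(l * d) + -l * n)
                linarith
              · have hn' : (d : ℝ) ≤ -n := by exact_mod_cast hn
                have := Real.one_le_exp (x := -(l * d) + -l * n) (by nlinarith)
                have := Real.exp_pos (-(l * d) + l * n)
                linarith
            calc _ ≤ (s.choose k : ℝ) / 2 ^ s * 1 :=
                  mul_le_mul_of_nonneg_left (Real.abs_cos_le_one _) hc
              _ ≤ _ := mul_le_mul_of_nonneg_left h1 hc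
              _ = _ := by ring
      _ = Real.exp (-(l * d)) * (2 * Real.cosh l ^ s) := by
          rw [← Finset.mul_sum, Finset.sum_add_distrib, aux_exp, aux_exp, Real.cosh_neg]; ring
      _ ≤ Real.exp (-(l * d)) * (2 * Real.exp (l ^ 2 / 2) ^ s) := by
          have := Real.cosh_le_exp_half_sq l
          have := (Real.cosh_pos l).le
          gcongr
      _ = _ := by
          rw [← Real.exp_nat_mul, mul_left_comm, ← Real.exp_add]
          congr 2
          rw [hl]; field_simp; ring
end

section
/- Let B be a real symmetric positive definite d×d matrix, A a real symmetric d×d matrix, β ∈ ℝ, and w₀ ∈ ℝ^d with ‖w₀‖_B = 1. Define the unnormalized sequence x₋₁ = 0, x₀ = w₀, x_{t+1} = B^{−1}A x_t − β x_{t−1} for t ≥ 0. Define the normalized sequence w₋₁ = 0, γ₀ = 1, and for t ≥ 0: γ_{t+1} = ‖B^{−1}A w_t − β γ_t^{−1} w_{t−1}‖_B and, assuming γ_{t+1} > 0, w_{t+1} = (B^{−1}A w_t − β γ_t^{−1} w_{t−1}) / γ_{t+1}. Then for every t ≥ 0 one has w_t = x_t / (γ₀ γ₁ ⋯ γ_t);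 in particular ‖x_t‖_B = γ₀ γ₁ ⋯ γ_t and w_t = x_t / ‖x_t‖_B. -/
open Matrix Finset

/-- The `B`-norm `‖x‖_B = √(xᵀ B x)` of a vector. -/
noncomputable def Bnorm {d : ℕ} (B : Matrix (Fin d) (Fin d) ℝ) (x : Fin d → ℝ) : ℝ :=
  Real.sqrt (x ⬝ᵥ (B *ᵥ x))

/-- **Equivalence of the normalized and unnormalized accelerated power iterations.**
Let `B` be real symmetric positive definite, `A` real symmetric, `β ∈ ℝ`, and
`‖w₀‖_B = 1`.  The sequences are indexed with an offset of one, so that `x (t+1)`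
stands for the paper's `x_t` and `x 0` for `x_{−1}`; likewise for `w`.  The
unnormalized sequence is `x_{−1} = 0`, `x_0 = w₀`, `x_{t+1} = B⁻¹A x_t − β x_{t−1}`.
The normalized sequence is `w_{−1} = 0`, `γ_0 = 1`, and for `t ≥ 0`,
`γ_{t+1} = ‖B⁻¹A w_t − β γ_t⁻¹ w_{t−1}‖_B > 0` with
`w_{t+1} = (B⁻¹A w_t − β γ_t⁻¹ w_{t−1}) / γ_{t+1}`.  Then for every `t ≥ 0`,
`w_t = x_t / (γ_0 γ_1 ⋯ γ_t)`; in particular `‖x_t‖_B = γ_0 γ_1 ⋯ γ_t` and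
`w_t = x_t / ‖x_t‖_B`. -/
theorem normalized_iterates_eq_unnormalized
    {d : ℕ} (B A : Matrix (Fin d) (Fin d) ℝ)
    (hB : B.PosDef) (hBsym : B.IsSymm) (hA : A.IsSymm) (β : ℝ)
    (w₀ : Fin d → ℝ) (hw₀ : Bnorm B w₀ = 1)
    (x w : ℕ → Fin d → ℝ) (γ : ℕ → ℝ)
    (hx0 : x 0 = 0) (hx1 : x 1 = w₀)
    (hxrec : ∀ t : ℕ, x (t + 2) = (B⁻¹ * A) *ᵥ x (t + 1) - β • x t)
    (hw0 : w 0 = 0) (hw1 : w 1 = w₀) (hγ0 : γ 0 = 1)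
    (hγ : ∀ t : ℕ,
      γ (t + 1) = Bnorm B ((B⁻¹ * A) *ᵥ w (t + 1) - (β * (γ t)⁻¹) • w t))
    (hγpos : ∀ t : ℕ, 0 < γ (t + 1))
    (hwrec : ∀ t : ℕ,
      w (t + 2) = (γ (t + 1))⁻¹ • ((B⁻¹ * A) *ᵥ w (t + 1) - (β * (γ t)⁻¹) • w t)) :
    ∀ t : ℕ,
      w (t + 1) = (∏ i ∈ Finset.range (t + 1), γ i)⁻¹ • x (t + 1) ∧
      Bnorm B (x (t + 1)) = ∏ i ∈ Finset.range (t + 1), γ i ∧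
      w (t + 1) = (Bnorm B (x (t + 1)))⁻¹ • x (t + 1) := by
  have hpos : ∀ t, 0 < γ t := by
    intro t
    cases t with
    | zero => rw [hγ0]; exact one_pos
    | succ n => exact hγpos n
  have hP : ∀ t, 0 < ∏ i ∈ Finset.range t, γ i := fun t =>
    Finset.prod_pos fun i _ => hpos i
  have key : ∀ t, w t = (∏ i ∈ Finset.range t, γ i)⁻¹ • x t →
      w (t + 1) = (∏ i ∈ Finset.range (t + 1), γ i)⁻¹ • x (t + 1) →
      (B⁻¹ * A) *ᵥ w (t + 1) - (β * (γ t)⁻¹) • w t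
        = (∏ i ∈ Finset.range (t + 1), γ i)⁻¹ • x (t + 2) := by
    intro t h1 h2
    rw [h1, h2, hxrec, Matrix.mulVec_smul, smul_sub, smul_smul, smul_smul,
      Finset.prod_range_succ, mul_inv]
    congr 2
    ring
  have main : ∀ t, w t = (∏ i ∈ Finset.range t, γ i)⁻¹ • x t ∧
      w (t + 1) = (∏ i ∈ Finset.range (t + 1), γ i)⁻¹ • x (t + 1) := by
    intro t
    induction t with
    | zero => simp [hw0, hx0, hw1, hx1, hγ0]
    | succ n ih =>
      refine ⟨ih.2, ?_⟩
      rw [hwrec, key n ih.1 ih.2, smul_smul, Finset.prod_range_succ _ (n + 1), mul_inv,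
        mul_comm]
  have hnorm : ∀ (c : ℝ) (v : Fin d → ℝ), 0 ≤ c → Bnorm B (c • v) = c * Bnorm B v := by
    intro c v hc
    unfold Bnorm
    rw [Matrix.mulVec_smul, smul_dotProduct, dotProduct_smul, smul_eq_mul, smul_eq_mul,
      ← mul_assoc, Real.sqrt_mul (mul_self_nonneg c), Real.sqrt_mul_self hc]
  have hN : ∀ t, Bnorm B (x (t + 1)) = ∏ i ∈ Finset.range (t + 1), γ i := by
    intro t
    cases t with
    | zero => simp [hx1, hw₀, hγ0]
    | succ n =>
      have h := hγ n
      rw [key n (main n).1 (main n).2, hnorm _ _ (inv_nonneg.2 (hP _).le)] at h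
      rw [Finset.prod_range_succ, h, mul_inv_cancel_left₀ (hP _).ne']
  intro t
  refine ⟨(main t).2, hN t, ?_⟩
  rw [hN t]
  exact (main t).2
end

section
/- Let λ₁, λ₂ be real numbers with |λ₁| > |λ₂| ≥ 0, let Δ = 1 − |λ₂|/|λ₁|, and let β = λ₂²/4. Then 1 − 2√β/(|λ₁| + √(λ₁² − 4β)) = 2√Δ·√|λ₁| / ( √(|λ₁| + |λ₂|) + √(|λ₁| − |λ₂|) ), and this quantity is at least √Δ/√2. -/
/-- **Eigenvalue-gap computation (proof of Theorem 1).**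
Let `|λ₁| > |λ₂| ≥ 0`, `Δ = 1 − |λ₂|/|λ₁|` and `β = λ₂²/4`.  Then
`1 − 2√β/(|λ₁| + √(λ₁² − 4β)) = 2√Δ√|λ₁|/(√(|λ₁|+|λ₂|) + √(|λ₁|−|λ₂|))`,
and this quantity is at least `√Δ/√2`. -/
theorem extended_gap_formula (lam₁ lam₂ : ℝ) (h : |lam₂| < |lam₁|) :
    1 - 2 * Real.sqrt (lam₂ ^ 2 / 4) /
        (|lam₁| + Real.sqrt (lam₁ ^ 2 - 4 * (lam₂ ^ 2 / 4))) =
      2 * Real.sqrt (1 - |lam₂| / |lam₁|) * Real.sqrt |lam₁| /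
        (Real.sqrt (|lam₁| + |lam₂|) + Real.sqrt (|lam₁| - |lam₂|)) ∧
    Real.sqrt (1 - |lam₂| / |lam₁|) / Real.sqrt 2 ≤
      2 * Real.sqrt (1 - |lam₂| / |lam₁|) * Real.sqrt |lam₁| /
        (Real.sqrt (|lam₁| + |lam₂|) + Real.sqrt (|lam₁| - |lam₂|)) := by
  have hb : 0 ≤ |lam₂| := abs_nonneg _
  have e1 : Real.sqrt (lam₂ ^ 2 / 4) = |lam₂| / 2 := by
    rw [← sq_abs, show |lam₂| ^ 2 / 4 = (|lam₂| / 2) ^ 2 by ring]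
    exact Real.sqrt_sq (by positivity)
  have e2 : lam₁ ^ 2 - 4 * (lam₂ ^ 2 / 4) = (|lam₁| + |lam₂|) * (|lam₁| - |lam₂|) := by
    rw [← sq_abs lam₁, ← sq_abs lam₂]; ring
  rw [e1, e2]
  generalize |lam₁| = a at *
  generalize |lam₂| = b at *
  have ha : 0 < a := by linarith
  have hD : 0 ≤ 1 - b / a := by
    rw [sub_nonneg, div_le_one ha]; exact h.le
  have e3 : Real.sqrt (1 - b / a) * Real.sqrt a = Real.sqrt (a - b) := by
    rw [← Real.sqrt_mul hD]; congr 1; field_simp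
  rw [Real.sqrt_mul (by linarith)]
  have hp : 0 < Real.sqrt (a + b) := Real.sqrt_pos.2 (by linarith)
  have hq : 0 < Real.sqrt (a - b) := Real.sqrt_pos.2 (by linarith)
  have hp2 : Real.sqrt (a + b) ^ 2 = a + b := Real.sq_sqrt (by linarith)
  have hq2 : Real.sqrt (a - b) ^ 2 = a - b := Real.sq_sqrt (by linarith)
  constructor
  · rw [mul_assoc 2, e3]
    generalize Real.sqrt (a + b) = p at *
    generalize Real.sqrt (a - b) = q at *
    have h1 : a = (p ^ 2 + q ^ 2) / 2 := by linarith
    have h2 : b = (p ^ 2 - q ^ 2) / 2 := by linarith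
    have h3 : a + p * q = (p + q) ^ 2 / 2 := by rw [h1]; ring
    rw [h3, h2]
    have : p + q ≠ 0 := by positivity
    field_simp
    ring
  · have h1 : Real.sqrt (a + b) ≤ Real.sqrt 2 * Real.sqrt a := by
      rw [← Real.sqrt_mul (by norm_num)]; exact Real.sqrt_le_sqrt (by linarith)
    have h2 : Real.sqrt (a - b) ≤ Real.sqrt 2 * Real.sqrt a := by
      rw [← Real.sqrt_mul (by norm_num)]; exact Real.sqrt_le_sqrt (by linarith)
    rw [div_le_div_iff₀ (by positivity) (by positivity)]
    have := mul_le_mul_of_nonneg_left (add_le_add h1 h2) (Real.sqrt_nonneg (1 - b / a))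
    linarith
end

section
/- Let B be a real symmetric positive definite d×d matrix and 1 ≤ k ≤ d. Let X, Y ∈ ℝ^{d×k} satisfy XᵀBX = YᵀBY = I_k. Then min over orthogonal k×k matrices Q (QᵀQ = I_k) of the spectral norm ‖B^{1/2}X − B^{1/2}YQ‖ is at most √(2 − 2·σ_min(XᵀBY)), where σ_min denotes the smallest singular value of the k×k matrix XᵀBY. -/
open Matrix

/-- The spectral norm (largest singular value) of a real rectangular matrix,
realized as the operator norm of the induced map between Euclidean spaces. -/
noncomputable def specNorm {m n : Type*} [Fintype m] [Fintype n] [DecidableEq n]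
    (M : Matrix m n ℝ) : ℝ :=
  ‖LinearMap.toContinuousLinearMap (Matrix.toEuclideanLin M)‖

/-- The smallest singular value of a square real matrix, realized as the infimum of
`‖Mx‖` over unit vectors `x` of the Euclidean space. -/
noncomputable def sminNorm {k : ℕ} (M : Matrix (Fin k) (Fin k) ℝ) : ℝ :=
  sInf {r : ℝ | ∃ x : EuclideanSpace ℝ (Fin k), ‖x‖ = 1 ∧ r = ‖Matrix.toEuclideanLin M x‖}

open scoped InnerProductSpace in
lemma aux_inner {m n p : ℕ} (A : Matrix (Fin m) (Fin n) ℝ) (C : Matrix (Fin m) (Fin p) ℝ)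
    (v : EuclideanSpace ℝ (Fin n)) (w : EuclideanSpace ℝ (Fin p)) :
    ⟪Matrix.toEuclideanLin A v, Matrix.toEuclideanLin C w⟫_ℝ
      = ⟪v, Matrix.toEuclideanLin (Aᵀ * C) w⟫_ℝ := by
  simp only [EuclideanSpace.inner_eq_star_dotProduct, Matrix.toEuclideanLin_apply, star_trivial]
  rw [← Matrix.mulVec_mulVec, Matrix.mulVec_transpose, ← Matrix.dotProduct_mulVec]

open scoped InnerProductSpace in
lemma aux_polar {k : ℕ} (T : EuclideanSpace ℝ (Fin k) →ₗ[ℝ] EuclideanSpace ℝ (Fin k))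
    (σ : ℝ) (hσ : ∀ x, ‖x‖ = 1 → σ ≤ ‖T x‖) :
    ∃ e : EuclideanSpace ℝ (Fin k) ≃ₗᵢ[ℝ] EuclideanSpace ℝ (Fin k),
      ∀ x, σ * ‖x‖ ^ 2 ≤ ⟪x, T (e x)⟫_ℝ := by
  have hn : Module.finrank ℝ (EuclideanSpace ℝ (Fin k)) = k := by simp
  set b := T.isSymmetric_adjoint_comp_self.eigenvectorBasis hn with hb
  have horth : ∀ i j, i ≠ j → ⟪T (b i), T (b j)⟫_ℝ = 0 := by
    intro i j hij
    have h1 := T.isSymmetric_adjoint_comp_self.apply_eigenvectorBasis hn j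
    rw [← LinearMap.adjoint_inner_right]
    have h2 : (LinearMap.adjoint T) (T (b j)) = _ := h1
    rw [h2, ← hb, inner_smul_right, b.orthonormal.2 hij, mul_zero]
  obtain ⟨u, hu⟩ := Orthonormal.exists_orthonormalBasis_extension_of_card_eq (𝕜 := ℝ)
    (E := EuclideanSpace ℝ (Fin k)) (ι := Fin k) (by simp)
    (v := fun i => (‖T (b i)‖)⁻¹ • T (b i)) (s := {i | T (b i) ≠ 0}) (by
      constructor
      · rintro ⟨i, hi⟩
        have : ‖T (b i)‖ ≠ 0 := norm_ne_zero_iff.2 hi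
        simp [Set.restrict, norm_smul, this]
      · rintro ⟨i, hi⟩ ⟨j, hj⟩ hij
        have : i ≠ j := fun h => hij (Subtype.ext h)
        simp [Set.restrict, inner_smul_left, inner_smul_right, horth i j this])
  have hT : ∀ i, T (b i) = ‖T (b i)‖ • u i := by
    intro i
    by_cases h : T (b i) = 0
    · simp [h]
    · rw [hu i h, smul_smul, mul_inv_cancel₀ (norm_ne_zero_iff.2 h), one_smul]
  refine ⟨u.equiv b (Equiv.refl _), fun x => ?_⟩
  have hx : T (u.equiv b (Equiv.refl _) x) = ∑ i, (⟪u i, x⟫_ℝ * ‖T (b i)‖) • u i := by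
    conv_lhs => rw [← u.sum_repr' x]
    simp only [map_sum, map_smul, OrthonormalBasis.equiv_apply_basis, Equiv.refl_apply]
    refine Finset.sum_congr rfl fun i _ => ?_
    rw [mul_smul, ← hT]
  rw [hx, inner_sum, ← u.sum_sq_norm_inner_right x, Finset.mul_sum]
  refine Finset.sum_le_sum fun i _ => ?_
  rw [inner_smul_right, real_inner_comm, Real.norm_eq_abs, sq_abs]
  nlinarith [mul_le_mul_of_nonneg_right (hσ (b i) (b.norm_eq_one i)) (sq_nonneg ⟪x, u i⟫_ℝ),
    real_inner_comm x (u i)]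

/-- **Lemma 1, second claim (distance between subspaces).**
Let `B` be real symmetric positive definite (`d×d`) with symmetric positive definite
square root `S = B^{1/2}`, `1 ≤ k ≤ d`, and let `X, Y ∈ ℝ^{d×k}` be `B`-orthonormal
(`XᵀBX = YᵀBY = I`).  Then the minimum over orthogonal `k×k` matrices `Q` of the
spectral norm `‖B^{1/2}X − B^{1/2}YQ‖` is at most `√(2 − 2σ_min(XᵀBY))`. -/
theorem dist_between_subspaces_min_rotation
    {d k : ℕ} (hk1 : 1 ≤ k) (hkd : k ≤ d)
    (B S : Matrix (Fin d) (Fin d) ℝ) (hB : B.PosDef) (hBsym : B.IsSymm)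
    (hS : S.PosDef) (hSsym : S.IsSymm) (hSsq : S * S = B)
    (X Y : Matrix (Fin d) (Fin k) ℝ)
    (hX : Xᵀ * B * X = 1) (hY : Yᵀ * B * Y = 1) :
    ∃ Q : Matrix (Fin k) (Fin k) ℝ, Qᵀ * Q = 1 ∧
      specNorm (S * X - S * Y * Q) ≤
        Real.sqrt (2 - 2 * sminNorm (Xᵀ * B * Y)) := by
  have hT : Sᵀ = S := hSsym
  have e1 : (S * X)ᵀ * (S * X) = 1 := by
    rw [Matrix.transpose_mul, hT, ← hX, ← hSsq]; simp only [Matrix.mul_assoc]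
  have e2 : (S * Y)ᵀ * (S * Y) = 1 := by
    rw [Matrix.transpose_mul, hT, ← hY, ← hSsq]; simp only [Matrix.mul_assoc]
  have e3 : (S * X)ᵀ * (S * Y) = Xᵀ * B * Y := by
    rw [Matrix.transpose_mul, hT, ← hSsq]; simp only [Matrix.mul_assoc]
  have one : ∀ v, Matrix.toEuclideanLin (1 : Matrix (Fin k) (Fin k) ℝ) v = v := by
    intro v; simp [Matrix.toEuclideanLin_apply]
  set σ := sminNorm (Xᵀ * B * Y) with hσ
  obtain ⟨e, he⟩ := aux_polar (Matrix.toEuclideanLin (Xᵀ * B * Y)) σ (by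
    intro x hx
    exact csInf_le ⟨0, by rintro r ⟨y, -, rfl⟩; positivity⟩ ⟨x, hx, rfl⟩)
  obtain ⟨Q, hQ⟩ := (Matrix.toEuclideanLin (𝕜 := ℝ) (m := Fin k) (n := Fin k)).surjective
    (e.toLinearEquiv : EuclideanSpace ℝ (Fin k) →ₗ[ℝ] EuclideanSpace ℝ (Fin k))
  have hQx : ∀ x, Matrix.toEuclideanLin Q x = e x := fun x => by rw [hQ]; rfl
  refine ⟨Q, ?_, ?_⟩
  · apply (Matrix.toEuclideanLin (𝕜 := ℝ) (m := Fin k) (n := Fin k)).injective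
    refine LinearMap.ext fun w => ext_inner_left ℝ fun v => ?_
    rw [← aux_inner, hQx, hQx, one, e.inner_map_map]
  · refine ContinuousLinearMap.opNorm_le_bound _ (Real.sqrt_nonneg _) fun v => ?_
    have hv : Matrix.toEuclideanLin (S * X - S * Y * Q) v
        = Matrix.toEuclideanLin (S * X) v - Matrix.toEuclideanLin (S * Y) (e v) := by
      rw [← hQx]
      simp [Matrix.toEuclideanLin_apply, Matrix.sub_mulVec, Matrix.mulVec_mulVec]
    have hsq : ‖Matrix.toEuclideanLin (S * X - S * Y * Q) v‖ ^ 2 ≤ (2 - 2 * σ) * ‖v‖ ^ 2 := by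
      rw [hv, norm_sub_sq_real, aux_inner, e3, ← real_inner_self_eq_norm_sq,
        ← real_inner_self_eq_norm_sq (Matrix.toEuclideanLin (S * Y) (e v)), aux_inner, aux_inner,
        e1, e2, one, one, e.inner_map_map, real_inner_self_eq_norm_sq]
      linarith [he v]
    change ‖Matrix.toEuclideanLin (S * X - S * Y * Q) v‖ ≤ _
    rw [← Real.sqrt_sq (norm_nonneg v), ← Real.sqrt_mul' _ (sq_nonneg _)]
    exact Real.le_sqrt_of_sq_le hsq
end

section
/- Let 𝓑 be a real symmetric positive definite 2d×2d matrix and C a real 2d×2d matrix admitting the decomposition C = V Λ Vᵀ𝓑 + V⊥ Λ⊥ V⊥ᵀ𝓑, where V ∈ ℝ^{2d×k} and V⊥ ∈ ℝ^{2d×(2d−k)} satisfy Vᵀ𝓑V = I_k, V⊥ᵀ𝓑V⊥ = I_{2d−k}, V⊥ᵀ𝓑V = 0, Λ = diag(μ₁,…,μ_k) and Λ⊥ = diag(μ_{k+1},…,μ_{2d}) with |μ₁| ≥ … ≥ |μ_k| > |μ_{k+1}| ≥ … ≥ |μ_{2d}|. Let Ȳ ∈ ℝ^{2d×k} satisfy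 Ȳᵀ𝓑Ȳ = I_k with Vᵀ𝓑Ȳ invertible, let Y = ȲG for some invertible G ∈ ℝ^{k×k} with ‖G^{−1}‖ ≤ 1, let Ξ ∈ ℝ^{2d×k} and R ∈ ℝ^{k×k} invertible, and set Y' = (CY + Ξ)R^{−1}, assuming Vᵀ𝓑Y' is invertible. If ‖Ξ‖_𝓑 ≤ ((|μ_k| − |μ_{k+1}|)/4) · min{ sinθ(Ȳ, V), cosθ(Ȳ, V) }, then tanθ(Y', V) ≤ ((|μ_k| + 3|μ_{k+1}|)/(3|μ_k| + |μ_{k+1}|)) · tanθ(Ȳ, V), where tanθ(Y', V) = ‖V⊥ᵀ𝓑Y'(Vᵀ𝓑Y')^{−1}‖. -/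
open Matrix

lemma tk_of_sq {a b : ℝ} (h : a ^ 2 ≤ b ^ 2) (hb : 0 ≤ b) : a ≤ b := (le_abs_self a).trans (abs_le_of_sq_le_sq h hb)

lemma tk_mul {l m n : Type*} [Fintype l] [Fintype m] [Fintype n] [DecidableEq m] [DecidableEq n]
    (M : Matrix l m ℝ) (N : Matrix m n ℝ) (x : EuclideanSpace ℝ n) :
    Matrix.toEuclideanLin (M * N) x = Matrix.toEuclideanLin M (Matrix.toEuclideanLin N x) := by
  simp [Matrix.toEuclideanLin, Matrix.toLpLin_apply, Matrix.mulVec_mulVec]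

lemma tk_one {n : Type*} [Fintype n] [DecidableEq n] (x : EuclideanSpace ℝ n) :
    Matrix.toEuclideanLin (1 : Matrix n n ℝ) x = x := by
  simp [Matrix.toEuclideanLin, Matrix.toLpLin_apply]

lemma tk_le {m n : Type*} [Fintype m] [Fintype n] [DecidableEq n]
    (M : Matrix m n ℝ) (x : EuclideanSpace ℝ n) :
    ‖Matrix.toEuclideanLin M x‖ ≤ specNorm M * ‖x‖ :=
  (LinearMap.toContinuousLinearMap (Matrix.toEuclideanLin M)).le_opNorm x

lemma tk_nonneg {m n : Type*} [Fintype m] [Fintype n] [DecidableEq n]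
    (M : Matrix m n ℝ) : 0 ≤ specNorm M := norm_nonneg _

lemma tk_bound {m n : Type*} [Fintype m] [Fintype n] [DecidableEq n]
    (M : Matrix m n ℝ) (c : ℝ) (hc : 0 ≤ c)
    (h : ∀ x, ‖Matrix.toEuclideanLin M x‖ ≤ c * ‖x‖) : specNorm M ≤ c :=
  (LinearMap.toContinuousLinearMap (Matrix.toEuclideanLin M)).opNorm_le_bound hc h

lemma tk_sq {m n : Type*} [Fintype m] [Fintype n] [DecidableEq m] [DecidableEq n]
    (M : Matrix m n ℝ) (x : EuclideanSpace ℝ n) :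
    ‖Matrix.toEuclideanLin M x‖ ^ 2 = inner ℝ x (Matrix.toEuclideanLin (Mᵀ * M) x) := by
  rw [tk_mul, ← real_inner_self_eq_norm_sq, ← Matrix.conjTranspose_eq_transpose_of_trivial,
    Matrix.toEuclideanLin_conjTranspose_eq_adjoint, LinearMap.adjoint_inner_right]

lemma tk_diag_sq {n : Type*} [Fintype n] [DecidableEq n] (μ : n → ℝ) (x : EuclideanSpace ℝ n) :
    ‖Matrix.toEuclideanLin (Matrix.diagonal μ) x‖ ^ 2 = ∑ i, |μ i| ^ 2 * (x i) ^ 2 := by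
  rw [EuclideanSpace.norm_sq_eq]
  simp [Matrix.toEuclideanLin, Matrix.toLpLin_apply, Matrix.mulVec_diagonal, mul_pow]

lemma tk_diag_le {n : Type*} [Fintype n] [DecidableEq n] (μ : n → ℝ) (a : ℝ) (ha : 0 ≤ a)
    (h : ∀ i, |μ i| ≤ a) (x : EuclideanSpace ℝ n) :
    ‖Matrix.toEuclideanLin (Matrix.diagonal μ) x‖ ≤ a * ‖x‖ := by
  apply tk_of_sq ?_ (by positivity)
  rw [tk_diag_sq, mul_pow, EuclideanSpace.norm_sq_eq, Finset.mul_sum]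
  apply Finset.sum_le_sum
  intro i _
  rw [Real.norm_eq_abs, sq_abs (x i)]
  gcongr
  exact h i

lemma tk_diag_ge {n : Type*} [Fintype n] [DecidableEq n] (μ : n → ℝ) (a : ℝ) (ha : 0 ≤ a)
    (h : ∀ i, a ≤ |μ i|) (x : EuclideanSpace ℝ n) :
    a * ‖x‖ ≤ ‖Matrix.toEuclideanLin (Matrix.diagonal μ) x‖ := by
  apply tk_of_sq ?_ (by positivity)
  rw [tk_diag_sq, mul_pow, EuclideanSpace.norm_sq_eq, Finset.mul_sum]
  apply Finset.sum_le_sum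
  intro i _
  rw [Real.norm_eq_abs, sq_abs (x i)]
  gcongr
  exact h i

lemma tk_complete {d k : ℕ} (hk2d : k < 2 * d)
    (𝓑 : Matrix (Fin (2 * d)) (Fin (2 * d)) ℝ) (h𝓑sym : 𝓑.IsSymm)
    (V : Matrix (Fin (2 * d)) (Fin k) ℝ)
    (Vperp : Matrix (Fin (2 * d)) (Fin (2 * d - k)) ℝ)
    (hV : Vᵀ * 𝓑 * V = 1) (hVperp : Vperpᵀ * 𝓑 * Vperp = 1)
    (hVV : Vperpᵀ * 𝓑 * V = 0) : V * (Vᵀ * 𝓑) + Vperp * (Vperpᵀ * 𝓑) = 1 := by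
  have hVV' : Vᵀ * 𝓑 * Vperp = 0 := by
    have := congrArg Matrix.transpose hVV
    simpa [Matrix.transpose_mul, h𝓑sym.eq, Matrix.mul_assoc] using this
  have h1 : Matrix.fromRows (Vᵀ * 𝓑) (Vperpᵀ * 𝓑) * Matrix.fromCols V Vperp = 1 := by
    rw [Matrix.fromRows_mul_fromCols, hV, hVperp, hVV, hVV', Matrix.fromBlocks_one]
  have e : Fin k ⊕ Fin (2 * d - k) ≃ Fin (2 * d) :=
    finSumFinEquiv.trans (finCongr (by omega))
  rw [Matrix.mul_eq_one_comm_of_equiv e, Matrix.fromCols_mul_fromRows] at h1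
  exact h1

lemma tk_parseval {d k : ℕ} (hk2d : k < 2 * d)
    (𝓑 Ssqrt : Matrix (Fin (2 * d)) (Fin (2 * d)) ℝ) (h𝓑sym : 𝓑.IsSymm)
    (hSsqrtSym : Ssqrt.IsSymm) (hSsq : Ssqrt * Ssqrt = 𝓑)
    (V : Matrix (Fin (2 * d)) (Fin k) ℝ)
    (Vperp : Matrix (Fin (2 * d)) (Fin (2 * d - k)) ℝ)
    (hV : Vᵀ * 𝓑 * V = 1) (hVperp : Vperpᵀ * 𝓑 * Vperp = 1)
    (hVV : Vperpᵀ * 𝓑 * V = 0) (X : Matrix (Fin (2 * d)) (Fin k) ℝ)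
    (x : EuclideanSpace ℝ (Fin k)) :
    ‖Matrix.toEuclideanLin (Vᵀ * 𝓑 * X) x‖ ^ 2 + ‖Matrix.toEuclideanLin (Vperpᵀ * 𝓑 * X) x‖ ^ 2
      = ‖Matrix.toEuclideanLin (Ssqrt * X) x‖ ^ 2 := by
  rw [tk_sq, tk_sq, tk_sq, ← inner_add_right, ← LinearMap.add_apply, ← map_add]
  congr 3
  have h := tk_complete hk2d 𝓑 h𝓑sym V Vperp hV hVperp hVV
  have h2 : (Xᵀ * 𝓑) * (V * (Vᵀ * 𝓑) + Vperp * (Vperpᵀ * 𝓑)) * X = Xᵀ * 𝓑 * X := by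
    rw [h, Matrix.mul_one]
  simp only [Matrix.transpose_mul, Matrix.transpose_transpose, h𝓑sym.eq, hSsqrtSym.eq]
  simp only [Matrix.mul_add, Matrix.add_mul, Matrix.mul_assoc] at h2 ⊢
  rw [h2, ← hSsq, Matrix.mul_assoc]

lemma tk_smin {k : ℕ} (M : Matrix (Fin k) (Fin k) ℝ) (x : EuclideanSpace ℝ (Fin k)) :
    sminNorm M * ‖x‖ ≤ ‖Matrix.toEuclideanLin M x‖ := by
  by_cases hx : x = 0
  · simp [hx]
  have hx' : 0 < ‖x‖ := norm_pos_iff.2 hx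
  have : sminNorm M ≤ ‖Matrix.toEuclideanLin M (‖x‖⁻¹ • x)‖ := by
    apply csInf_le
    · exact ⟨0, by rintro r ⟨y, _, rfl⟩; positivity⟩
    · exact ⟨_, by rw [norm_smul, norm_inv, norm_norm, inv_mul_cancel₀ hx'.ne'], rfl⟩
  rw [map_smul, norm_smul, norm_inv, norm_norm] at this
  calc _ ≤ _ := mul_le_mul_of_nonneg_right this hx'.le
    _ = _ := by field_simp

lemma tk_le_smin {k : ℕ} (hk : 0 < k) (M : Matrix (Fin k) (Fin k) ℝ) (c : ℝ)
    (h : ∀ x : EuclideanSpace ℝ (Fin k), ‖x‖ = 1 → c ≤ ‖Matrix.toEuclideanLin M x‖) :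
    c ≤ sminNorm M := by
  apply le_csInf
  · exact ⟨_, EuclideanSpace.single ⟨0, hk⟩ 1, by simp, rfl⟩
  · rintro r ⟨y, hy, rfl⟩
    exact h y hy

set_option maxHeartbeats 2000000 in
/-- **One-step contraction for the top-`k` noisy accelerated power iteration
(proof of Theorem 2).**  Here `Ssqrt = 𝓑^{1/2}` is the symmetric positive definite
square root of `𝓑`, so `‖M‖_𝓑 = specNorm (Ssqrt * M)`; `cosθ(Ȳ,V) = σ_k(Vᵀ𝓑Ȳ)`,
`sinθ(Ȳ,V) = ‖V⊥ᵀ𝓑Ȳ‖`, and `tanθ(M,V) = ‖V⊥ᵀ𝓑M(Vᵀ𝓑M)⁻¹‖`. -/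
theorem topk_one_step_contraction
    {d k : ℕ} (hk0 : 0 < k) (hk2d : k < 2 * d)
    (𝓑 C Ssqrt : Matrix (Fin (2 * d)) (Fin (2 * d)) ℝ)
    (h𝓑 : 𝓑.PosDef) (h𝓑sym : 𝓑.IsSymm)
    (hSsqrt : Ssqrt.PosDef) (hSsqrtSym : Ssqrt.IsSymm) (hSsq : Ssqrt * Ssqrt = 𝓑)
    (V : Matrix (Fin (2 * d)) (Fin k) ℝ)
    (Vperp : Matrix (Fin (2 * d)) (Fin (2 * d - k)) ℝ)
    (hV : Vᵀ * 𝓑 * V = 1) (hVperp : Vperpᵀ * 𝓑 * Vperp = 1)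
    (hVV : Vperpᵀ * 𝓑 * V = 0)
    (μ : Fin k → ℝ) (ν : Fin (2 * d - k) → ℝ)
    (hμmono : ∀ i j : Fin k, i ≤ j → |μ j| ≤ |μ i|)
    (hνmono : ∀ i j : Fin (2 * d - k), i ≤ j → |ν j| ≤ |ν i|)
    (hgap : |ν ⟨0, by omega⟩| < |μ ⟨k - 1, by omega⟩|)
    (hC : C = V * Matrix.diagonal μ * Vᵀ * 𝓑 + Vperp * Matrix.diagonal ν * Vperpᵀ * 𝓑)
    (Ybar : Matrix (Fin (2 * d)) (Fin k) ℝ)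
    (hYbar : Ybarᵀ * 𝓑 * Ybar = 1) (hYbarV : IsUnit (Vᵀ * 𝓑 * Ybar).det)
    (G : Matrix (Fin k) (Fin k) ℝ) (hG : IsUnit G.det) (hGinv : specNorm G⁻¹ ≤ 1)
    (Y : Matrix (Fin (2 * d)) (Fin k) ℝ) (hY : Y = Ybar * G)
    (Ξ : Matrix (Fin (2 * d)) (Fin k) ℝ)
    (R : Matrix (Fin k) (Fin k) ℝ) (hR : IsUnit R.det)
    (Y' : Matrix (Fin (2 * d)) (Fin k) ℝ) (hY' : Y' = (C * Y + Ξ) * R⁻¹)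
    (hY'V : IsUnit (Vᵀ * 𝓑 * Y').det)
    (hΞ : specNorm (Ssqrt * Ξ) ≤
      (|μ ⟨k - 1, by omega⟩| - |ν ⟨0, by omega⟩|) / 4 *
        min (specNorm (Vperpᵀ * 𝓑 * Ybar)) (sminNorm (Vᵀ * 𝓑 * Ybar))) :
    specNorm (Vperpᵀ * 𝓑 * Y' * (Vᵀ * 𝓑 * Y')⁻¹) ≤
      (|μ ⟨k - 1, by omega⟩| + 3 * |ν ⟨0, by omega⟩|) /
          (3 * |μ ⟨k - 1, by omega⟩| + |ν ⟨0, by omega⟩|) *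
        specNorm (Vperpᵀ * 𝓑 * Ybar * (Vᵀ * 𝓑 * Ybar)⁻¹) := by
  set a := |μ ⟨k - 1, by omega⟩| with ha
  set b := |ν ⟨0, by omega⟩| with hb
  have hb0 : 0 ≤ b := abs_nonneg _
  have hμ : ∀ i, a ≤ |μ i| := fun i => hμmono _ _ (by rw [Fin.le_def]; simp; omega)
  have hν : ∀ i, |ν i| ≤ b := fun i => hνmono _ _ (by rw [Fin.le_def]; simp)
  have hVV' : Vᵀ * 𝓑 * Vperp = 0 := by
    have := congrArg Matrix.transpose hVV
    simpa [Matrix.transpose_mul, h𝓑sym.eq, Matrix.mul_assoc] using this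
  have hP := tk_parseval hk2d 𝓑 Ssqrt h𝓑sym hSsqrtSym hSsq V Vperp hV hVperp hVV
  have hPY : ∀ x, ‖Matrix.toEuclideanLin (Vᵀ * 𝓑 * Ybar) x‖ ^ 2 +
      ‖Matrix.toEuclideanLin (Vperpᵀ * 𝓑 * Ybar) x‖ ^ 2 = ‖x‖ ^ 2 := by
    intro x
    rw [hP, tk_sq, ← real_inner_self_eq_norm_sq]
    have : (Ssqrt * Ybar)ᵀ * (Ssqrt * Ybar) = 1 := by
      rw [← hYbar, ← hSsq]
      simp only [Matrix.transpose_mul, hSsqrtSym.eq, Matrix.mul_assoc]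
    rw [this, tk_one]
  have hCV : Vᵀ * 𝓑 * C = Matrix.diagonal μ * (Vᵀ * 𝓑) := by
    rw [hC, Matrix.mul_add]
    calc _ = (Vᵀ * 𝓑 * V) * (Matrix.diagonal μ * (Vᵀ * 𝓑)) +
          (Vᵀ * 𝓑 * Vperp) * (Matrix.diagonal ν * (Vperpᵀ * 𝓑)) := by
          simp only [Matrix.mul_assoc]
      _ = _ := by rw [hV, hVV']; simp
  have hCVp : Vperpᵀ * 𝓑 * C = Matrix.diagonal ν * (Vperpᵀ * 𝓑) := by
    rw [hC, Matrix.mul_add]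
    calc _ = (Vperpᵀ * 𝓑 * V) * (Matrix.diagonal μ * (Vᵀ * 𝓑)) +
          (Vperpᵀ * 𝓑 * Vperp) * (Matrix.diagonal ν * (Vperpᵀ * 𝓑)) := by
          simp only [Matrix.mul_assoc]
      _ = _ := by rw [hVperp, hVV]; simp
  have hN1 : Vᵀ * 𝓑 * Y' = (Matrix.diagonal μ * (Vᵀ * 𝓑 * Ybar) * G + Vᵀ * 𝓑 * Ξ) * R⁻¹ := by
    rw [hY', hY, ← Matrix.mul_assoc, Matrix.mul_add, ← Matrix.mul_assoc, hCV]
    simp only [Matrix.mul_assoc]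
  have hN2 : Vperpᵀ * 𝓑 * Y' =
      (Matrix.diagonal ν * (Vperpᵀ * 𝓑 * Ybar) * G + Vperpᵀ * 𝓑 * Ξ) * R⁻¹ := by
    rw [hY', hY, ← Matrix.mul_assoc, Matrix.mul_add, ← Matrix.mul_assoc, hCVp]
    simp only [Matrix.mul_assoc]
  set t := specNorm (Vperpᵀ * 𝓑 * Ybar * (Vᵀ * 𝓑 * Ybar)⁻¹) with ht
  have ht0 : 0 ≤ t := tk_nonneg _
  have hST : ∀ x, ‖Matrix.toEuclideanLin (Vperpᵀ * 𝓑 * Ybar) x‖ ≤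
      t * ‖Matrix.toEuclideanLin (Vᵀ * 𝓑 * Ybar) x‖ := by
    intro x
    have := tk_le (Vperpᵀ * 𝓑 * Ybar * (Vᵀ * 𝓑 * Ybar)⁻¹)
      (Matrix.toEuclideanLin (Vᵀ * 𝓑 * Ybar) x)
    rwa [← tk_mul, Matrix.nonsing_inv_mul_cancel_right _ _ hYbarV] at this
  set c := sminNorm (Vᵀ * 𝓑 * Ybar) with hc
  set s := specNorm (Vperpᵀ * 𝓑 * Ybar) with hs
  have hcA : ∀ x, c * ‖x‖ ≤ ‖Matrix.toEuclideanLin (Vᵀ * 𝓑 * Ybar) x‖ := tk_smin _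
  have hc0 : 0 ≤ c := tk_le_smin hk0 _ _ fun x _ => norm_nonneg _
  have hc1 : 1 ≤ (1 + t ^ 2) * c ^ 2 := by
    have h1 : Real.sqrt (1 / (1 + t ^ 2)) ≤ c := by
      apply tk_le_smin hk0
      intro x hx
      apply Real.sqrt_le_iff.2 ⟨norm_nonneg _, _⟩
      rw [div_le_iff₀ (by positivity)]
      have h1 := hPY x
      have h2 := pow_le_pow_left₀ (norm_nonneg _) (hST x) 2
      rw [hx] at h1
      nlinarith
    have h2 := (Real.sqrt_le_left hc0).1 h1
    rwa [div_le_iff₀ (by positivity), mul_comm] at h2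
  have hstc : s ≤ t * c := by
    apply tk_bound _ _ (by positivity)
    intro x
    apply tk_of_sq ?_ (by positivity)
    have h1 := hPY x
    have h2 := pow_le_pow_left₀ (by positivity) (hcA x) 2
    nlinarith [mul_le_mul_of_nonneg_right hc1 (sq_nonneg ‖x‖)]
  set ε := specNorm (Ssqrt * Ξ) with hε
  have hE1 : ∀ x, ‖Matrix.toEuclideanLin (Vᵀ * 𝓑 * Ξ) x‖ ≤ ε * ‖x‖ := fun x =>
    (tk_of_sq (b := ‖Matrix.toEuclideanLin (Ssqrt * Ξ) x‖) (by nlinarith [hP Ξ x, sq_nonneg ‖Matrix.toEuclideanLin (Vperpᵀ * 𝓑 * Ξ) x‖])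
      (norm_nonneg _)).trans (tk_le _ x)
  have hE2 : ∀ x, ‖Matrix.toEuclideanLin (Vperpᵀ * 𝓑 * Ξ) x‖ ≤ ε * ‖x‖ := fun x =>
    (tk_of_sq (b := ‖Matrix.toEuclideanLin (Ssqrt * Ξ) x‖) (by nlinarith [hP Ξ x, sq_nonneg ‖Matrix.toEuclideanLin (Vᵀ * 𝓑 * Ξ) x‖])
      (norm_nonneg _)).trans (tk_le _ x)
  have hε0 : 0 ≤ ε := tk_nonneg _
  have hg : 0 ≤ (a - b) / 4 := by linarith
  have hεs : ε ≤ (a - b) / 4 * (t * c) :=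
    hΞ.trans (mul_le_mul_of_nonneg_left ((min_le_left _ _).trans hstc) hg)
  have hεc : ε ≤ (a - b) / 4 * c := hΞ.trans (mul_le_mul_of_nonneg_left (min_le_right _ _) hg)
  have hden : 0 < 3 * a + b := by linarith
  apply tk_bound _ _ (mul_nonneg (div_nonneg (by linarith) hden.le) ht0)
  intro z
  obtain ⟨x, hx⟩ : ∃ x, x = Matrix.toEuclideanLin (Vᵀ * 𝓑 * Y')⁻¹ z := ⟨_, rfl⟩
  have hz : z = Matrix.toEuclideanLin (Vᵀ * 𝓑 * Y') x := by
    rw [hx, ← tk_mul, Matrix.mul_nonsing_inv _ hY'V, tk_one]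
  rw [tk_mul, ← hx, hz, hN1, hN2, tk_mul, tk_mul]
  generalize Matrix.toEuclideanLin R⁻¹ x = w
  rw [map_add, map_add, LinearMap.add_apply, LinearMap.add_apply, tk_mul _ G, tk_mul _ G,
    tk_mul (Matrix.diagonal μ), tk_mul (Matrix.diagonal ν)]
  have hw : ‖w‖ ≤ ‖Matrix.toEuclideanLin G w‖ := by
    have h := tk_le G⁻¹ (Matrix.toEuclideanLin G w)
    rw [← tk_mul, Matrix.nonsing_inv_mul _ hG, tk_one] at h
    exact h.trans (mul_le_of_le_one_left (norm_nonneg _) hGinv)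
  generalize Matrix.toEuclideanLin G w = u at *
  have hA := hcA u
  have hS := hST u
  have hD1 := tk_diag_ge μ a (by linarith) hμ (Matrix.toEuclideanLin (Vᵀ * 𝓑 * Ybar) u)
  have hD2 := tk_diag_le ν b hb0 hν (Matrix.toEuclideanLin (Vperpᵀ * 𝓑 * Ybar) u)
  have hF1 := (hE1 w).trans (mul_le_mul_of_nonneg_left hw hε0)
  have hF2 := (hE2 w).trans (mul_le_mul_of_nonneg_left hw hε0)
  set q := ‖Matrix.toEuclideanLin (Vᵀ * 𝓑 * Ybar) u‖ with hq
  have hG1 : ε * ‖u‖ ≤ (a - b) / 4 * q :=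
    calc _ ≤ (a - b) / 4 * c * ‖u‖ := mul_le_mul_of_nonneg_right hεc (norm_nonneg _)
      _ = (a - b) / 4 * (c * ‖u‖) := by ring
      _ ≤ _ := mul_le_mul_of_nonneg_left hA hg
  have hG2 : ε * ‖u‖ ≤ (a - b) / 4 * t * q :=
    calc _ ≤ (a - b) / 4 * (t * c) * ‖u‖ := mul_le_mul_of_nonneg_right hεs (norm_nonneg _)
      _ = (a - b) / 4 * t * (c * ‖u‖) := by ring
      _ ≤ _ := mul_le_mul_of_nonneg_left hA (mul_nonneg hg ht0)
  have hlow := norm_sub_le_norm_add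
    (Matrix.toEuclideanLin (Matrix.diagonal μ) (Matrix.toEuclideanLin (Vᵀ * 𝓑 * Ybar) u))
    (Matrix.toEuclideanLin (Vᵀ * 𝓑 * Ξ) w)
  refine (norm_add_le _ _).trans ?_
  have hbS := mul_le_mul_of_nonneg_left hS hb0
  have hfin : (3 * a + b) / 4 * q ≤ ‖Matrix.toEuclideanLin (Matrix.diagonal μ)
      (Matrix.toEuclideanLin (Vᵀ * 𝓑 * Ybar) u) + Matrix.toEuclideanLin (Vᵀ * 𝓑 * Ξ) w‖ := by
    linarith
  refine le_trans ?_ (mul_le_mul_of_nonneg_left hfin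
    (mul_nonneg (div_nonneg (by linarith) hden.le) ht0))
  have hden2 : 3 * a + b ≠ 0 := hden.ne'
  have : (a + 3 * b) / (3 * a + b) * t * ((3 * a + b) / 4 * q) = (a + 3 * b) / 4 * t * q := by
    generalize 3 * a + b = D at hden2
    field_simp
  rw [this]
  linarith
end
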